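/- Let 𝔄 be a structure interpreting the signature Σ (which contains the unary predicate O and the binary predicates R_h, R_v, and does not contain Q, P). Then φ₂ is satisfied in some {Q,P}-extension of 𝔄 if and only if there exists an element a ∈ O^𝔄 that either starts an infinite R_h/R_v-path in 𝔄 or starts a finite R_h/R_v-path ending at the root of a non-closing grid cell. -/

import Mathlib

/-! Core: relational two-variable first-order logic with equality (unary and
binary predicates only), the guarded fragment GF², structures, satisfaction,
atomic types, (bounded/delimited) guarded bisimulations, forest structures. -/

namespace GFC

inductive Var : Type
  | x
  | y
deriving DecidableEq

/-- Formulas of two-variable relational FO with equality (variables `x`, `y`). -/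
inductive Fml (U B : Type) : Type
  | uatom : U → Var → Fml U B
  | batom : B → Var → Var → Fml U B
  | eqv   : Var → Var → Fml U B
  | fls   : Fml U B
  | neg   : Fml U B → Fml U B
  | conj  : Fml U B → Fml U B → Fml U B
  | disj  : Fml U B → Fml U B → Fml U B
  | impl  : Fml U B → Fml U B → Fml U B
  | all   : Var → Fml U B → Fml U B
  | ex    : Var → Fml U B → Fml U B

namespace Fml

variable {U B : Type}

def free : Fml U B → Set Var
  | uatom _ v => {v}
  | batom _ v w => {v, w}
  | eqv v w => {v, w}
  | fls => ∅
  | neg φ => φ.free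
  | conj φ ψ => φ.free ∪ ψ.free
  | disj φ ψ => φ.free ∪ ψ.free
  | impl φ ψ => φ.free ∪ ψ.free
  | all v φ => φ.free \ {v}
  | ex v φ => φ.free \ {v}

def IsSentence (φ : Fml U B) : Prop := φ.free = ∅

def upreds : Fml U B → Set U
  | uatom P _ => {P}
  | batom _ _ _ => ∅
  | eqv _ _ => ∅
  | fls => ∅
  | neg φ => φ.upreds
  | conj φ ψ => φ.upreds ∪ ψ.upreds
  | disj φ ψ => φ.upreds ∪ ψ.upreds
  | impl φ ψ => φ.upreds ∪ ψ.upreds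
  | all _ φ => φ.upreds
  | ex _ φ => φ.upreds

def bpreds : Fml U B → Set B
  | uatom _ _ => ∅
  | batom R _ _ => {R}
  | eqv _ _ => ∅
  | fls => ∅
  | neg φ => φ.bpreds
  | conj φ ψ => φ.bpreds ∪ ψ.bpreds
  | disj φ ψ => φ.bpreds ∪ ψ.bpreds
  | impl φ ψ => φ.bpreds ∪ ψ.bpreds
  | all _ φ => φ.bpreds
  | ex _ φ => φ.bpreds

def IsAtom : Fml U B → Prop
  | uatom _ _ => True
  | batom _ _ _ => True
  | eqv _ _ => True
  | _ => False

def IsEqAtom : Fml U B → Prop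
  | eqv _ _ => True
  | _ => False

/-- guarded quantifier depth (in GF² formulas every quantifier is guarded) -/
def gdepth : Fml U B → ℕ
  | uatom _ _ => 0
  | batom _ _ _ => 0
  | eqv _ _ => 0
  | fls => 0
  | neg φ => φ.gdepth
  | conj φ ψ => max φ.gdepth ψ.gdepth
  | disj φ ψ => max φ.gdepth ψ.gdepth
  | impl φ ψ => max φ.gdepth ψ.gdepth
  | all _ φ => φ.gdepth + 1
  | ex _ φ => φ.gdepth + 1

/-- subformulas (including the formula itself) -/
def Subf : Fml U B → Set (Fml U B)
  | uatom P v => {uatom P v}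
  | batom R v w => {batom R v w}
  | eqv v w => {eqv v w}
  | fls => {fls}
  | neg φ => insert (neg φ) φ.Subf
  | conj φ ψ => insert (conj φ ψ) (φ.Subf ∪ ψ.Subf)
  | disj φ ψ => insert (disj φ ψ) (φ.Subf ∪ ψ.Subf)
  | impl φ ψ => insert (impl φ ψ) (φ.Subf ∪ ψ.Subf)
  | all v φ => insert (all v φ) φ.Subf
  | ex v φ => insert (ex v φ) φ.Subf

/-- rename the free variables along `f` (bound variables untouched) -/
def renameFree : (Var → Var) → Fml U B → Fml U B
  | f, uatom P v => uatom P (f v)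
  | f, batom R v w => batom R (f v) (f w)
  | f, eqv v w => eqv (f v) (f w)
  | _, fls => fls
  | f, neg φ => neg (renameFree f φ)
  | f, conj φ ψ => conj (renameFree f φ) (renameFree f ψ)
  | f, disj φ ψ => disj (renameFree f φ) (renameFree f ψ)
  | f, impl φ ψ => impl (renameFree f φ) (renameFree f ψ)
  | f, all v φ => all v (renameFree (Function.update f v v) φ)
  | f, ex v φ => ex v (renameFree (Function.update f v v) φ)

end Fml

/-- The two-variable guarded fragment GF²: quantification only in the guarded
patterns `∀v (α → φ)` and `∃v (α ∧ φ)` with `α` an atom containing all free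
variables of `φ` as well as the quantified variable `v`. -/
inductive IsGF2 {U B : Type} : Fml U B → Prop
  | uatom (P : U) (v : Var) : IsGF2 (.uatom P v)
  | batom (R : B) (v w : Var) : IsGF2 (.batom R v w)
  | eqv (v w : Var) : IsGF2 (.eqv v w)
  | fls : IsGF2 .fls
  | neg {φ} : IsGF2 φ → IsGF2 (.neg φ)
  | conj {φ ψ} : IsGF2 φ → IsGF2 ψ → IsGF2 (.conj φ ψ)
  | disj {φ ψ} : IsGF2 φ → IsGF2 ψ → IsGF2 (.disj φ ψ)
  | impl {φ ψ} : IsGF2 φ → IsGF2 ψ → IsGF2 (.impl φ ψ)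
  | allG {v : Var} {α φ : Fml U B} :
      α.IsAtom → IsGF2 φ → φ.free ∪ {v} ⊆ α.free → IsGF2 (.all v (.impl α φ))
  | exG {v : Var} {α φ : Fml U B} :
      α.IsAtom → IsGF2 φ → φ.free ∪ {v} ⊆ α.free → IsGF2 (.ex v (.conj α φ))

/-- openGF²: GF² formulas with exactly one free variable, in which equality is
never used as a guard and which contain no subformula that is a sentence. -/
def IsOpenGF2 {U B : Type} (φ : Fml U B) : Prop :=
  IsGF2 φ ∧ (∃ v, φ.free = {v}) ∧
  (∀ ψ ∈ φ.Subf, ¬ ψ.IsSentence) ∧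
  (∀ ψ ∈ φ.Subf, ∀ (v : Var) (α χ : Fml U B),
      (ψ = .all v (.impl α χ) ∨ ψ = .ex v (.conj α χ)) → ¬ α.IsEqAtom)

/-- relational structures interpreting unary predicates `U` and binary
predicates `B` -/
structure Str (U B : Type) where
  Dom : Type
  nonempty : Nonempty Dom
  u : U → Dom → Prop
  b : B → Dom → Dom → Prop

def upd {D : Type} (σ : Var → D) (v : Var) (d : D) : Var → D :=
  fun w => if w = v then d else σ w

def Sat {U B : Type} (A : Str U B) : Fml U B → (Var → A.Dom) → Prop
  | .uatom P v, σ => A.u P (σ v)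
  | .batom R v w, σ => A.b R (σ v) (σ w)
  | .eqv v w, σ => σ v = σ w
  | .fls, _ => False
  | .neg φ, σ => ¬ Sat A φ σ
  | .conj φ ψ, σ => Sat A φ σ ∧ Sat A ψ σ
  | .disj φ ψ, σ => Sat A φ σ ∨ Sat A ψ σ
  | .impl φ ψ, σ => Sat A φ σ → Sat A ψ σ
  | .all v φ, σ => ∀ d : A.Dom, Sat A φ (upd σ v d)
  | .ex v φ, σ => ∃ d : A.Dom, Sat A φ (upd σ v d)

/-- truth of a sentence in a structure -/
def SatS {U B : Type} (A : Str U B) (φ : Fml U B) : Prop := ∀ σ, Sat A φ σ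

def Entails {U B : Type} (φ ψ : Fml U B) : Prop :=
  ∀ A : Str U B, SatS A φ → SatS A ψ

def Satisfiable {U B : Type} (φ : Fml U B) : Prop := ∃ A : Str U B, SatS A φ

/-- a GF²(Σ)-sentence, for the signature Σ = (SU, SB) -/
def IsGF2Sentence {U B : Type} (SU : Set U) (SB : Set B) (ψ : Fml U B) : Prop :=
  IsGF2 ψ ∧ ψ.IsSentence ∧ ψ.upreds ⊆ SU ∧ ψ.bpreds ⊆ SB

/-- `φ₁ ⊨_Σ φ₂` : GF²(Σ)-entailment -/
def GF2Entails {U B : Type} (SU : Set U) (SB : Set B) (φ₁ φ₂ : Fml U B) : Prop :=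
  ∀ ψ : Fml U B, IsGF2Sentence SU SB ψ → Entails φ₂ ψ → Entails φ₁ ψ

/-- atomic formulas in the variables x, y -/
inductive Atom2 (U B : Type) : Type
  | ua : U → Var → Atom2 U B
  | ba : B → Var → Var → Atom2 U B

def vval {D : Type} (a a' : D) : Var → D
  | .x => a
  | .y => a'

def Atom2.inSig {U B : Type} (SU : Set U) (SB : Set B) : Atom2 U B → Prop
  | .ua P _ => P ∈ SU
  | .ba R _ _ => R ∈ SB

def Atom2.holds {U B : Type} (A : Str U B) (a a' : A.Dom) : Atom2 U B → Prop
  | .ua P v => A.u P (vval a a' v)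
  | .ba R v w => A.b R (vval a a' v) (vval a a' w)

def Atom2.onlyX {U B : Type} : Atom2 U B → Prop
  | .ua _ v => v = Var.x
  | .ba _ v w => v = Var.x ∧ w = Var.x

/-- the atomic 1-type of `a` for the signature `(SU, SB)` (the set of
Σ-atoms in the single variable x satisfied by `a`; this determines the set of
negated atoms as well) -/
def atp1 {U B : Type} (A : Str U B) (SU : Set U) (SB : Set B) (a : A.Dom) :
    Set (Atom2 U B) :=
  {α | α.onlyX ∧ α.inSig SU SB ∧ α.holds A a a}

/-- the atomic 2-type of `(a, a')` for the signature `(SU, SB)` (the set of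
Σ-atoms in x, y satisfied by `(a, a')`; together with `a ≠ a'` this determines
the atomic 2-type) -/
def atp2 {U B : Type} (A : Str U B) (SU : Set U) (SB : Set B) (a a' : A.Dom) :
    Set (Atom2 U B) :=
  {α | α.inSig SU SB ∧ α.holds A a a'}

/-- the atomic 2-type of `(a, a')` is guarded (contains `R x y` or `R y x`
for some binary `R ∈ SB`) -/
def Guarded2 {U B : Type} (A : Str U B) (SB : Set B) (a a' : A.Dom) : Prop :=
  ∃ R ∈ SB, A.b R a a' ∨ A.b R a' a

/-- GF²(Σ)-bisimulation between structures `A` and `Bm` -/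
structure IsBisim {U B : Type} (A Bm : Str U B) (SU : Set U) (SB : Set B)
    (Z : A.Dom → Bm.Dom → Prop) : Prop where
  atom_eq : ∀ {a b}, Z a b → atp1 A SU SB a = atp1 Bm SU SB b
  forth : ∀ {a b}, Z a b → ∀ a', a' ≠ a → Guarded2 A SB a a' →
      ∃ b', b' ≠ b ∧ atp2 A SU SB a a' = atp2 Bm SU SB b b' ∧ Z a' b'
  back : ∀ {a b}, Z a b → ∀ b', b' ≠ b → Guarded2 Bm SB b b' →
      ∃ a', a' ≠ a ∧ atp2 A SU SB a a' = atp2 Bm SU SB b b' ∧ Z a' b'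

/-- `(A, a) ∼_Σ (Bm, b)` -/
def Bisim {U B : Type} (A Bm : Str U B) (SU : Set U) (SB : Set B)
    (a : A.Dom) (b : Bm.Dom) : Prop :=
  ∃ Z, IsBisim A Bm SU SB Z ∧ Z a b

/-- `(A, a) ∼ᵏ_Σ (Bm, b)` : k-GF²(Σ)-bisimilarity -/
def KBisim {U B : Type} (A Bm : Str U B) (SU : Set U) (SB : Set B) :
    ℕ → A.Dom → Bm.Dom → Prop
  | 0, a, b => atp1 A SU SB a = atp1 Bm SU SB b
  | k+1, a, b => atp1 A SU SB a = atp1 Bm SU SB b ∧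
      (∀ a', a' ≠ a → Guarded2 A SB a a' →
        ∃ b', b' ≠ b ∧ atp2 A SU SB a a' = atp2 Bm SU SB b b' ∧
          KBisim A Bm SU SB k a' b') ∧
      (∀ b', b' ≠ b → Guarded2 Bm SB b b' →
        ∃ a', a' ≠ a ∧ atp2 A SU SB a a' = atp2 Bm SU SB b b' ∧
          KBisim A Bm SU SB k a' b')

/-- a (full-signature) atomic 2-type, given as its set of positive atoms,
is guarded -/
def Guarded2Type {U B : Type} (τ : Set (Atom2 U B)) : Prop :=
  ∃ R : B, Atom2.ba R Var.x Var.y ∈ τ ∨ Atom2.ba R Var.y Var.x ∈ τ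

/-- successor-saturated structures -/
def SuccSaturated {U B : Type} (A : Str U B) : Prop :=
  ∀ (a : A.Dom) (τ : Set (Atom2 U B)) (Γ : Set (Fml U B)),
    Guarded2Type τ →
    (∀ ψ ∈ Γ, IsOpenGF2 ψ ∧ ψ.free = {Var.x}) →
    (∀ Γ' : Finset (Fml U B), ↑Γ' ⊆ Γ →
      ∃ a', a' ≠ a ∧ atp2 A Set.univ Set.univ a a' = τ ∧
        ∀ ψ ∈ Γ', Sat A ψ (fun _ => a')) →
    ∃ b', b' ≠ a ∧ atp2 A Set.univ Set.univ a b' = τ ∧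
      ∀ ψ ∈ Γ, Sat A ψ (fun _ => b')

/-- finite outdegree: every element stands in a guarded atomic 2-type (for the
full signature) to only finitely many elements -/
def FiniteOutdeg {U B : Type} (A : Str U B) : Prop :=
  ∀ a : A.Dom, {a' | a' ≠ a ∧ ∃ R : B, A.b R a a' ∨ A.b R a' a}.Finite

/-- Σ-adjacency (edges of the Gaifman graph of the Σ-reduct) -/
def SigAdj {U B : Type} (A : Str U B) (SB : Set B) (a a' : A.Dom) : Prop :=
  a ≠ a' ∧ ∃ R ∈ SB, A.b R a a' ∨ A.b R a' a

/-- A forest structure: a structure whose Gaifman graph is a forest, directed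
by choosing a root for each tree; `parent p c` says that `p` is the
predecessor (parent) of `c`. -/
structure Forest (U B : Type) extends Str U B where
  parent : Dom → Dom → Prop
  parent_unique : ∀ {c p p' : Dom}, parent p c → parent p' c → p = p'
  parent_wf : WellFounded parent
  adj_iff : ∀ a a' : Dom,
    (a ≠ a' ∧ ∃ R : B, b R a a' ∨ b R a' a) ↔ (parent a a' ∨ parent a' a)

namespace Forest

variable {U B : Type}

/-- `a` together with its descendants -/
def desc (F : Forest U B) (a : F.Dom) : Set F.Dom :=
  {c | Relation.ReflTransGen F.parent a c}

/-- the subtrees rooted at `a` and at `a'` are isomorphic -/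
def SubtreeIso (F : Forest U B) (a a' : F.Dom) : Prop :=
  ∃ f : (F.desc a) ≃ (F.desc a'),
    (f ⟨a, Relation.ReflTransGen.refl⟩).val = a' ∧
    (∀ c d : F.desc a, F.parent c.val d.val ↔ F.parent (f c).val (f d).val) ∧
    (∀ (P : U) (c : F.desc a), F.u P c.val ↔ F.u P (f c).val) ∧
    (∀ (R : B) (c d : F.desc a), F.b R c.val d.val ↔ F.b R (f c).val (f d).val)

/-- regular: only finitely many subtrees up to isomorphism -/
def Regular (F : Forest U B) : Prop :=
  ∃ S : Set F.Dom, S.Finite ∧ ∀ a, ∃ a' ∈ S, F.SubtreeIso a' a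

/-- `a ≺ a'` : `a` and `a'` lie in the same Σ-tree and `a` is a proper
ancestor of `a'` -/
def prec (F : Forest U B) (SB : Set B) (a a' : F.Dom) : Prop :=
  Relation.ReflTransGen (SigAdj F.toStr SB) a a' ∧ Relation.TransGen F.parent a a'

end Forest

/-- `a_⊥`-delimited GF²(Σ)-bisimulation: like a GF²(Σ)-bisimulation except that
the back-and-forth conditions are not required at pairs whose first component
is `abot` -/
structure IsPtDelimBisim {U B : Type} (A Bm : Str U B) (SU : Set U) (SB : Set B)
    (abot : A.Dom) (Z : A.Dom → Bm.Dom → Prop) : Prop where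
  atom_eq : ∀ {a b}, Z a b → atp1 A SU SB a = atp1 Bm SU SB b
  forth : ∀ {a b}, Z a b → a ≠ abot → ∀ a', a' ≠ a → Guarded2 A SB a a' →
      ∃ b', b' ≠ b ∧ atp2 A SU SB a a' = atp2 Bm SU SB b b' ∧ Z a' b'
  back : ∀ {a b}, Z a b → a ≠ abot → ∀ b', b' ≠ b → Guarded2 Bm SB b b' →
      ∃ a', a' ≠ a ∧ atp2 A SU SB a a' = atp2 Bm SU SB b b' ∧ Z a' b'

/-- `(A, a) ∼^{a_⊥}_Σ (Bm, b)` -/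
def PtDelimBisim {U B : Type} (A Bm : Str U B) (SU : Set U) (SB : Set B)
    (abot : A.Dom) (a : A.Dom) (b : Bm.Dom) : Prop :=
  ∃ Z, IsPtDelimBisim A Bm SU SB abot Z ∧ Z a b

/-- `A_⊥`-delimited GF²(Σ)-bisimulation between a forest structure `F` and a
structure `Bm`, given by a pair of relations `Z0 (∼⁰)` and `Z1 (∼¹)`. -/
structure IsDelimBisim {U B : Type} (F : Forest U B) (Bm : Str U B)
    (SU : Set U) (SB : Set B) (Abot : Set F.Dom)
    (Z0 Z1 : F.Dom → Bm.Dom → Prop) : Prop where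
  zero : ∀ {a b}, Z0 a b →
    atp1 F.toStr SU SB a = atp1 Bm SU SB b ∧
    (∀ a', a' ≠ a → Guarded2 F.toStr SB a a' →
      ∃ b', b' ≠ b ∧
        ((F.parent a' a ∧ a' ∈ Abot) → Z1 a' b') ∧
        (¬ (F.parent a' a ∧ a' ∈ Abot) → Z0 a' b')) ∧
    (∀ b', b' ≠ b → Guarded2 Bm SB b b' →
      ∃ a', a' ≠ a ∧
        ((F.parent a' a ∧ a' ∈ Abot) → Z1 a' b') ∧
        (¬ (F.parent a' a ∧ a' ∈ Abot) → Z0 a' b'))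
  one : ∀ {a b}, Z1 a b → (∀ p, F.parent p a → p ∉ Abot) →
    atp1 F.toStr SU SB a = atp1 Bm SU SB b ∧
    (∀ a', a' ≠ a → Guarded2 F.toStr SB a a' →
      ∃ b', b' ≠ b ∧
        ((F.parent a a' ∧ a ∈ Abot) → Z0 a' b') ∧
        (¬ (F.parent a a' ∧ a ∈ Abot) → Z1 a' b')) ∧
    (∀ b', b' ≠ b → Guarded2 Bm SB b b' →
      ∃ a', a' ≠ a ∧
        ((F.parent a a' ∧ a ∈ Abot) → Z0 a' b') ∧
        (¬ (F.parent a a' ∧ a ∈ Abot) → Z1 a' b'))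

/-- `(F, a) ∼^{A_⊥}_Σ (Bm, b)` -/
def DelimBisim {U B : Type} (F : Forest U B) (Bm : Str U B)
    (SU : Set U) (SB : Set B) (Abot : Set F.Dom) (a : F.Dom) (b : Bm.Dom) : Prop :=
  ∃ Z0 Z1, IsDelimBisim F Bm SU SB Abot Z0 Z1 ∧ Z0 a b

/-- `cl φ` : the subformulas of `φ` closed under single negation and renaming
of free variables (among x, y) -/
def clSet {U B : Type} (φ : Fml U B) : Set (Fml U B) :=
  {χ | ∃ ψ ∈ φ.Subf, ∃ f : Var → Var,
      χ = ψ.renameFree f ∨ χ = .neg (ψ.renameFree f)}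

/-- a 1-type for `φ₂`: a set of formulas `ψ(x)` from `cl φ₂` such that
`φ₂ ∧ ∃x ⋀ t(x)` is satisfiable -/
def OneType {U B : Type} (φ₂ : Fml U B) (t : Set (Fml U B)) : Prop :=
  t ⊆ clSet φ₂ ∧ (∀ ψ ∈ t, ψ.free ⊆ {Var.x}) ∧
  ∃ (A : Str U B) (a : A.Dom), SatS A φ₂ ∧ ∀ ψ ∈ t, Sat A ψ (fun _ => a)

/-- `tp_Bm(b)` : the 1-type of `b` in `Bm` (w.r.t. `φ₂`) -/
def tpOf {U B : Type} (Bm : Str U B) (φ₂ : Fml U B) (b : Bm.Dom) :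
    Set (Fml U B) :=
  {ψ | ψ ∈ clSet φ₂ ∧ ψ.free ⊆ {Var.x} ∧ Sat Bm ψ (fun _ => b)}

end GFC

namespace GFC

open Classical in
/-- replace the interpretations of the unary predicates `Qp` and `Pp` by `q`
and `p` (a {Q,P}-extension of the underlying Σ-structure) -/
noncomputable def override {U B : Type} (A : Str U B) (Qp Pp : U)
    (q p : A.Dom → Prop) : Str U B where
  Dom := A.Dom
  nonempty := A.nonempty
  u := fun P a => if P = Qp then q a else if P = Pp then p a else A.u P a
  b := A.b

/-- `φ_D(x) = ∃y(R_h xy ∧ ∀x(R_v yx → Px)) ∧ ∃y(R_v xy ∧ ∀x(R_h yx → ¬Px))` -/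
def phiD {U B : Type} (Pp : U) (Rh Rv : B) : Fml U B :=
  .conj
    (.ex .y (.conj (.batom Rh .x .y)
      (.all .x (.impl (.batom Rv .y .x) (.uatom Pp .x)))))
    (.ex .y (.conj (.batom Rv .x .y)
      (.all .x (.impl (.batom Rh .y .x) (.neg (.uatom Pp .x))))))

/-- `φ₂ = ∃x(Ox ∧ Qx) ∧ ∀x(Qx → (∃y(R_h xy ∧ Qy) ∨ ∃y(R_v xy ∧ Qy) ∨ φ_D(x)))` -/
def phiTwo {U B : Type} (O Qp Pp : U) (Rh Rv : B) : Fml U B :=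
  .conj
    (.ex .x (.conj (.uatom O .x) (.uatom Qp .x)))
    (.all .x (.impl (.uatom Qp .x)
      (.disj (.ex .y (.conj (.batom Rh .x .y) (.uatom Qp .y)))
        (.disj (.ex .y (.conj (.batom Rv .x .y) (.uatom Qp .y)))
          (phiD Pp Rh Rv)))))

/-- one `R_h/R_v`-step -/
def hvStep {U B : Type} (A : Str U B) (Rh Rv : B) (a a' : A.Dom) : Prop :=
  A.b Rh a a' ∨ A.b Rv a a'

/-- `a` is the root of a non-closing grid cell -/
def NonClosingRoot {U B : Type} (A : Str U B) (Rh Rv : B) (a : A.Dom) : Prop :=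
  ∃ b₁ b₂ : A.Dom, A.b Rh a b₁ ∧ A.b Rv a b₂ ∧
    ¬ ∃ c : A.Dom, A.b Rv b₁ c ∧ A.b Rh b₂ c

theorem sat_phiTwo_iff {U B : Type} (O Qp Pp : U) (Rh Rv : B)
    (hOQ : O ≠ Qp) (hOP : O ≠ Pp) (hQP : Qp ≠ Pp) (A : Str U B) (q p : A.Dom → Prop) :
    SatS (override A Qp Pp q p) (phiTwo O Qp Pp Rh Rv) ↔
    ((∃ a, A.u O a ∧ q a) ∧ ∀ a, q a → ((∃ b, A.b Rh a b ∧ q b) ∨ (∃ b, A.b Rv a b ∧ q b) ∨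
      ((∃ b, A.b Rh a b ∧ ∀ c, A.b Rv b c → p c) ∧
        (∃ b, A.b Rv a b ∧ ∀ c, A.b Rh b c → ¬ p c)))) := by
  have key : ∀ σ, Sat (override A Qp Pp q p) (phiTwo O Qp Pp Rh Rv) σ ↔
    ((∃ a, A.u O a ∧ q a) ∧ ∀ a, q a → ((∃ b, A.b Rh a b ∧ q b) ∨ (∃ b, A.b Rv a b ∧ q b) ∨
      ((∃ b, A.b Rh a b ∧ ∀ c, A.b Rv b c → p c) ∧
        (∃ b, A.b Rv a b ∧ ∀ c, A.b Rh b c → ¬ p c)))) := by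
    intro σ
    simp [phiTwo, phiD, Sat, upd, override, hOQ, hOP, hQP.symm]
  constructor
  · intro h
    obtain ⟨d⟩ := A.nonempty
    exact (key (fun _ => d)).1 (h _)
  · intro h σ
    exact (key σ).2 h

/-- Lemma on φ₂: `φ₂` is satisfied in some {Q,P}-extension
of the Σ-structure `𝔄` iff some element of `O^𝔄` starts an infinite
`R_h/R_v`-path or a finite `R_h/R_v`-path ending at the root of a non-closing
grid cell. -/
theorem phi2_satisfiable_in_extension_iff_path_condition
    {U B : Type} (O Qp Pp : U) (Rh Rv : B)
    (hOQ : O ≠ Qp) (hOP : O ≠ Pp) (hQP : Qp ≠ Pp) (hR : Rh ≠ Rv)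
    (A : Str U B) :
    (∃ q p : A.Dom → Prop, SatS (override A Qp Pp q p) (phiTwo O Qp Pp Rh Rv)) ↔
    (∃ a : A.Dom, A.u O a ∧
      ((∃ ρ : ℕ → A.Dom, ρ 0 = a ∧ ∀ n, hvStep A Rh Rv (ρ n) (ρ (n+1))) ∨
       (∃ (k : ℕ) (ρ : ℕ → A.Dom), ρ 0 = a ∧
         (∀ n, n < k → hvStep A Rh Rv (ρ n) (ρ (n+1))) ∧
         NonClosingRoot A Rh Rv (ρ k)))) := by
  constructor
  · rintro ⟨q, p, h⟩
    rw [sat_phiTwo_iff O Qp Pp Rh Rv hOQ hOP hQP] at h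
    obtain ⟨⟨a, hO, hq⟩, h⟩ := h
    refine ⟨a, hO, ?_⟩
    have hn : ∀ x, ∃ y, q x → ¬ NonClosingRoot A Rh Rv x → hvStep A Rh Rv x y ∧ q y := by
      intro x
      by_cases hx : q x
      · rcases h x hx with ⟨y, h1, h2⟩ | ⟨y, h1, h2⟩ | ⟨⟨b, h1, h2⟩, ⟨c, h3, h4⟩⟩
        · exact ⟨y, fun _ _ => ⟨Or.inl h1, h2⟩⟩
        · exact ⟨y, fun _ _ => ⟨Or.inr h1, h2⟩⟩
        · exact ⟨x, fun _ hN => absurd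
            ⟨b, c, h1, h3, fun ⟨d, h5, h6⟩ => h4 d h6 (h2 d h5)⟩ hN⟩
      · exact ⟨x, fun h => absurd h hx⟩
    choose f hf using hn
    have hs : ∀ n, f^[n+1] a = f (f^[n] a) := fun n => Function.iterate_succ_apply' f n a
    have hQ : ∀ n, (∀ m < n, ¬ NonClosingRoot A Rh Rv (f^[m] a)) → q (f^[n] a) := by
      intro n
      induction n with
      | zero => intro _; exact hq
      | succ n ih =>
        intro hm
        rw [hs]
        exact (hf _ (ih fun m hmn => hm m (by omega)) (hm n (by omega))).2
    by_cases hN : ∃ n, NonClosingRoot A Rh Rv (f^[n] a)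
    · right
      classical
      refine ⟨Nat.find hN, fun n => f^[n] a, rfl, ?_, Nat.find_spec hN⟩
      intro n hn
      have hlt : ∀ m ≤ n, ¬ NonClosingRoot A Rh Rv (f^[m] a) :=
        fun m hm => Nat.find_min hN (lt_of_le_of_lt hm hn)
      show hvStep A Rh Rv (f^[n] a) (f^[n+1] a)
      rw [hs]
      exact (hf _ (hQ n fun m hm => hlt m hm.le) (hlt n le_rfl)).1
    · left
      push Not at hN
      refine ⟨fun n => f^[n] a, rfl, fun n => ?_⟩
      show hvStep A Rh Rv (f^[n] a) (f^[n+1] a)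
      rw [hs]
      exact (hf _ (hQ n fun m _ => hN m) (hN n)).1
  · rintro ⟨a, hO, ⟨ρ, h0, hρ⟩ | ⟨k, ρ, h0, hρ, b₁, b₂, h1, h2, h3⟩⟩
    · refine ⟨fun x => ∃ n, ρ n = x, fun _ => True, ?_⟩
      rw [sat_phiTwo_iff O Qp Pp Rh Rv hOQ hOP hQP]
      refine ⟨⟨a, hO, 0, h0⟩, ?_⟩
      rintro _ ⟨n, rfl⟩
      rcases hρ n with h | h
      · exact Or.inl ⟨_, h, n+1, rfl⟩
      · exact Or.inr (Or.inl ⟨_, h, n+1, rfl⟩)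
    · refine ⟨fun x => ∃ n, n ≤ k ∧ ρ n = x, fun c => A.b Rv b₁ c, ?_⟩
      rw [sat_phiTwo_iff O Qp Pp Rh Rv hOQ hOP hQP]
      refine ⟨⟨a, hO, 0, k.zero_le, h0⟩, ?_⟩
      rintro _ ⟨n, hn, rfl⟩
      rcases Nat.lt_or_ge n k with hlt | hge
      · rcases hρ n hlt with h | h
        · exact Or.inl ⟨_, h, n+1, hlt, rfl⟩
        · exact Or.inr (Or.inl ⟨_, h, n+1, hlt, rfl⟩)
      · obtain rfl : n = k := le_antisymm hn hge
        exact Or.inr (Or.inr ⟨⟨b₁, h1, fun c hc => hc⟩,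
          ⟨b₂, h2, fun c hc hc' => h3 ⟨c, hc', hc⟩⟩⟩)

end GFC
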